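/- Let x₁, …, x_N be independent random points distributed uniformly on S². Let H_N = ⊕_{i=1}^N x_i^⊥ (a 2N-dimensional Euclidean space with the direct-sum inner product) and let C_N : H_N → H_N be the symmetric operator given on the i-th component by (C_N s)(i) = (1/N)·∑_{j ≠ i} C(x_i, x_j)(s(j)) (almost surely x_i ≠ ±x_j for i ≠ j, so this is well defined). Let 𝕍_N ⊂ H_N be the direct sum of the eigenspaces of C_N with eigenvalue greater than 1/3. Then the probability that dim 𝕍_N = 3 tends to 1 as N → ∞. -/

import Mathlib

noncomputable section

open MeasureTheory Submodule
open scoped RealInnerProductSpace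

abbrev V : Type := EuclideanSpace ℝ (Fin 3)

abbrev S2 : Type := Metric.sphere (0 : V) 1

/-- The plane `x^⊥` orthogonal to a point `x` of the unit sphere. -/
def plane (x : S2) : Submodule ℝ V := (ℝ ∙ (x : V))ᗮ

/-- The common line `x^⊥ ∩ y^⊥`. -/
def cline (x y : S2) : Submodule ℝ V := plane x ⊓ plane y

/-- The common-lines kernel `C(x,y) : V → V`: orthogonal projection onto the line
`x^⊥ ∩ y^⊥`.  Its restriction to `y^⊥` is the kernel of the paper: it sends `v ∈ y^⊥` to
the orthogonal projection of `v` onto `x^⊥ ∩ y^⊥`, viewed inside `x^⊥`. -/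
def Cker (x y : S2) : V →ₗ[ℝ] V :=
  (cline x y).subtype ∘ₗ (orthogonalProjection (cline x y)).toLinearMap

/-- The map on the sphere induced by a linear isometry of `V`. -/
def sphereMap (g : V ≃ₗᵢ[ℝ] V) (x : S2) : S2 :=
  ⟨g x, by
    have := mem_sphere_zero_iff_norm.mp x.2
    simp [mem_sphere_zero_iff_norm, this]⟩

/-- The antipodal map on the sphere. -/
def negS (x : S2) : S2 :=
  ⟨-(x : V), by
    have := mem_sphere_zero_iff_norm.mp x.2
    simp [mem_sphere_zero_iff_norm, this]⟩

/-- The discrete common lines operator determined by `N` points `p i` of the sphere, acting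
on `⊕ᵢ V ⊇ H_N = ⊕ᵢ (p i)^⊥` by `(C_N s)(i) = (1/N)·∑_{j ≠ i} C(p i, p j)(s j)`.  Each
kernel `Cker (p i) (p j)` kills the line `ℝ·(p j)` and takes values in `(p i)^⊥`, so this
endomorphism vanishes on `⊕ᵢ ℝ·(p i)` and restricts to the operator `C_N : H_N → H_N` of
the paper; in particular its eigenspaces for nonzero eigenvalues are contained in `H_N` and
coincide with those of `C_N`. -/
def CN (N : ℕ) (p : Fin N → S2) : (Fin N → V) →ₗ[ℝ] (Fin N → V) :=
  LinearMap.pi fun i =>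
    (N : ℝ)⁻¹ • ∑ j ∈ Finset.univ.erase i, (Cker (p i) (p j)) ∘ₗ LinearMap.proj j

/-- The intrinsic model `𝕍_N`: the sum of the eigenspaces of `C_N` with eigenvalue `> 1/3`. -/
def VN (N : ℕ) (p : Fin N → S2) : Submodule ℝ (Fin N → V) :=
  ⨆ lam : ℝ, ⨆ _ : lam > 1 / 3, Module.End.eigenspace (CN N p) lam

/-!
Write `P_x` for the orthogonal projection onto `x^⊥` and `t` for `⟪x, y⟫`.  Up to a bilinear form of
norm at most `|t| / 2`, the kernel `C(x, y)` is `(v, w) ↦ ⟪P_x v, P_y w⟫ - t / 2 * ⟪x × v, y × w⟫`.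
Summed over all pairs of points, the first part vanishes on the vectors `s` that satisfy
`∑ P_{x_i} s_i = 0`, a space of codimension at most `3`, and the second part is nonpositive, because
Gram matrices have positive semidefinite entrywise products.  As `t ^ 2` has mean `1 / 3`, on this
space the quadratic form of `C_N` is at most about `√(1 / 3) / 2 < 1 / 3`, so that `dim 𝕍_N ≤ 3`.

Conversely, the quadratic form of `C_N - 1 / 3` is positive on the nonzero vectors of the form
`(P_{x_i} v)_i`, so that `dim 𝕍_N ≥ 3`: with `⟪v, C(x, y) v⟫` bounded below by
`(1 + t ^ 2) * ⟪x × y, v⟫ ^ 2`, the mean of `⟪v, C(x, y) v⟫ - ‖P_y v‖ ^ 2 / 3` is at least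
`2 / 45 * ‖v‖ ^ 2`.  The strong law of large numbers replaces the means by the averages over the
sample.
-/

/-- The sum of the eigenspaces of `T` whose eigenvalue exceeds `c`; `VN N p` is the case
`T = CN N p`, `c = 1 / 3`. -/
def spectralAbove {M : Type*} [AddCommGroup M] [Module ℝ M] (T : M →ₗ[ℝ] M) (c : ℝ) :
    Submodule ℝ M :=
  ⨆ lam : ℝ, ⨆ _ : lam > c, Module.End.eigenspace T lam

namespace spectralAbove

lemma map_conj {M M' : Type*} [AddCommGroup M] [Module ℝ M] [AddCommGroup M'] [Module ℝ M']
    (e : M ≃ₗ[ℝ] M') (T : M →ₗ[ℝ] M) (c : ℝ) :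
    (spectralAbove T c).map (e : M →ₗ[ℝ] M') = spectralAbove (e.conj T) c := by
  have map_eigenspace (lam : ℝ) : (Module.End.eigenspace T lam).map (e : M →ₗ[ℝ] M') =
      Module.End.eigenspace (e.conj T) lam := by
    ext z
    rw [Submodule.mem_map_equiv, Module.End.mem_eigenspace_iff, Module.End.mem_eigenspace_iff,
      LinearEquiv.conj_apply_apply, ← e.symm.injective.eq_iff, e.symm_apply_apply, map_smul]
  simp only [spectralAbove, Submodule.map_iSup, map_eigenspace]

variable {E F : Type*} [NormedAddCommGroup E] [InnerProductSpace ℝ E] [FiniteDimensional ℝ E]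
  [AddCommGroup F] [Module ℝ F] {T : E →ₗ[ℝ] E} {c : ℝ} {s : E}

lemma inner_apply_sub_mul_norm_sq (hT : T.IsSymmetric) (c : ℝ) (s : E) :
    ⟪T s, s⟫ - c * ‖s‖ ^ 2 =
      ∑ i, (hT.eigenvalues rfl i - c) * ⟪hT.eigenvectorBasis rfl i, s⟫ ^ 2 := by
  have form : ⟪T s, s⟫ = ∑ i, hT.eigenvalues rfl i * ⟪hT.eigenvectorBasis rfl i, s⟫ ^ 2 := by
    rw [← OrthonormalBasis.sum_inner_mul_inner (hT.eigenvectorBasis rfl)]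
    refine Finset.sum_congr rfl fun i _ => ?_
    rw [hT s, hT.apply_eigenvectorBasis, real_inner_smul_right, real_inner_comm, mul_assoc, sq,
      RCLike.ofReal_real_eq_id, id]
  have norm_sq : ‖s‖ ^ 2 = ∑ i, ⟪hT.eigenvectorBasis rfl i, s⟫ ^ 2 :=
    ((hT.eigenvectorBasis rfl).sum_sq_inner_right s).symm
  simp only [form, norm_sq, sub_mul, Finset.sum_sub_distrib, Finset.mul_sum]

lemma inner_eigenvectorBasis_eq_zero (hT : T.IsSymmetric) (hs : s ∈ spectralAbove T c)
    {i : Fin (Module.finrank ℝ E)} (hi : hT.eigenvalues rfl i ≤ c) :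
    ⟪hT.eigenvectorBasis rfl i, s⟫ = 0 := by
  have le_orthogonal : spectralAbove T c ≤ (ℝ ∙ hT.eigenvectorBasis rfl i)ᗮ := by
    refine iSup₂_le fun lam hlam z hz => mem_orthogonal_singleton_iff_inner_right.mpr ?_
    exact hT.orthogonalFamily_eigenspaces (hi.trans_lt hlam).ne
      ⟨_, (hT.hasEigenvector_eigenvectorBasis rfl i).1⟩ ⟨z, hz⟩
  exact mem_orthogonal_singleton_iff_inner_right.mp (le_orthogonal hs)

lemma lt_inner_apply (hT : T.IsSymmetric) (hs : s ∈ spectralAbove T c) (hs0 : s ≠ 0) :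
    c * ‖s‖ ^ 2 < ⟪T s, s⟫ := by
  obtain ⟨i, hi⟩ : ∃ i, ⟪hT.eigenvectorBasis rfl i, s⟫ ≠ 0 := by
    contrapose! hs0
    rw [← norm_eq_zero, ← sq_eq_zero_iff, ← (hT.eigenvectorBasis rfl).sum_sq_inner_right s]
    simp [hs0]
  have eigenvalue_gt {i} (hi : ⟪hT.eigenvectorBasis rfl i, s⟫ ≠ 0) : c < hT.eigenvalues rfl i :=
    not_le.mp fun hle => hi (inner_eigenvectorBasis_eq_zero hT hs hle)
  rw [← sub_pos, inner_apply_sub_mul_norm_sq hT]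
  refine Finset.sum_pos' (fun j _ => ?_)
    ⟨i, Finset.mem_univ i, mul_pos (sub_pos.mpr (eigenvalue_gt hi)) (by positivity)⟩
  by_cases hj : ⟪hT.eigenvectorBasis rfl j, s⟫ = 0
  · simp [hj]
  · exact mul_nonneg (sub_pos.mpr (eigenvalue_gt hj)).le (sq_nonneg _)

lemma inner_apply_le_of_mem_orthogonal (hT : T.IsSymmetric) (hs : s ∈ (spectralAbove T c)ᗮ) :
    ⟪T s, s⟫ ≤ c * ‖s‖ ^ 2 := by
  rw [← sub_nonpos, inner_apply_sub_mul_norm_sq hT]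
  refine Finset.sum_nonpos fun i _ => ?_
  rcases le_or_gt (hT.eigenvalues rfl i) c with hi | hi
  · exact mul_nonpos_of_nonpos_of_nonneg (sub_nonpos.mpr hi) (sq_nonneg _)
  · have hmem : hT.eigenvectorBasis rfl i ∈ spectralAbove T c :=
      mem_iSup_of_mem _ (mem_iSup_of_mem hi (hT.hasEigenvector_eigenvectorBasis rfl i).1)
    simp [hs _ hmem]

lemma finrank_le [FiniteDimensional ℝ F] (hT : T.IsSymmetric) (L : E →ₗ[ℝ] F)
    (hL : ∀ s, L s = 0 → ⟪T s, s⟫ ≤ c * ‖s‖ ^ 2) :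
    Module.finrank ℝ (spectralAbove T c) ≤ Module.finrank ℝ F := by
  refine LinearMap.finrank_le_finrank_of_injective (f := L.domRestrict (spectralAbove T c)) ?_
  rw [injective_iff_map_eq_zero]
  intro s hs
  by_contra hs0
  exact (hL s hs).not_gt (lt_inner_apply hT s.2 (by simpa using hs0))

lemma le_finrank (hT : T.IsSymmetric) (J : F →ₗ[ℝ] E)
    (hJ : ∀ v, v ≠ 0 → c * ‖J v‖ ^ 2 < ⟪T (J v), J v⟫) :
    Module.finrank ℝ F ≤ Module.finrank ℝ (spectralAbove T c) := by
  refine LinearMap.finrank_le_finrank_of_injective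
    (f := (spectralAbove T c).orthogonalProjectionOnto.toLinearMap ∘ₗ J) ?_
  rw [injective_iff_map_eq_zero]
  intro v hv
  by_contra hv0
  exact (hJ v hv0).not_ge (inner_apply_le_of_mem_orthogonal hT (by simpa using hv))

end spectralAbove

section InnerProductSpace

variable {ι E F : Type*} [NormedAddCommGroup E] [InnerProductSpace ℝ E]
  [NormedAddCommGroup F] [InnerProductSpace ℝ F]

lemma inner_starProjection_eq_norm_sq (K : Submodule ℝ E) [K.HasOrthogonalProjection] (v : E) :
    ⟪v, K.starProjection v⟫ = ‖K.starProjection v‖ ^ 2 := by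
  rw [real_inner_comm]
  exact re_inner_starProjection_eq_normSq K v

/-- The entrywise product of two Gram matrices is positive semidefinite: it is the Gram matrix of
the tensors `x i ⊗ y i`. -/
lemma sum_sum_inner_mul_inner_nonneg [Fintype ι] (x : ι → E) (y : ι → F) :
    0 ≤ ∑ i, ∑ j, ⟪x i, x j⟫ * ⟪y i, y j⟫ := by
  have norm_sq : ∑ i, ∑ j, ⟪x i, x j⟫ * ⟪y i, y j⟫ =
      ‖∑ i, TensorProduct.tmul ℝ (x i) (y i)‖ ^ 2 := by
    rw [← real_inner_self_eq_norm_sq, Finset.sum_comm]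
    simp only [sum_inner, inner_sum, TensorProduct.inner_tmul]
  rw [norm_sq]
  positivity

lemma sum_sum_mul_le_sqrt_mul [Fintype ι] (M : ι → ι → ℝ) (a : ι → ℝ) :
    ∑ i, ∑ j, M i j * (a i * a j) ≤ √(∑ i, ∑ j, M i j ^ 2) * ∑ i, a i ^ 2 := by
  have cauchy_schwarz := Real.sum_mul_le_sqrt_mul_sqrt Finset.univ
    (fun q : ι × ι => M q.1 q.2) (fun q => a q.1 * a q.2)
  have sum_sq_eq : ∑ i, ∑ j, (a i * a j) ^ 2 = (∑ i, a i ^ 2) ^ 2 := by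
    simp only [sq (∑ i, a i ^ 2), Finset.sum_mul_sum, mul_pow]
  simpa only [Fintype.sum_prod_type, sum_sq_eq, Real.sqrt_sq, Finset.sum_nonneg, sq_nonneg,
    implies_true] using cauchy_schwarz

end InnerProductSpace

section CrossProduct

open scoped Matrix

/-- The cross product, transported from `Fin 3 → ℝ` to Euclidean space. -/
def cross (x y : V) : V := WithLp.toLp 2 (x.ofLp ⨯₃ y.ofLp)

lemma inner_cross_left (x y : V) : ⟪x, cross x y⟫ = 0 := by
  simp [cross, EuclideanSpace.inner_eq_star_dotProduct, dotProduct_comm _ x.ofLp]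

lemma inner_cross_right (x y : V) : ⟪y, cross x y⟫ = 0 := by
  simp [cross, EuclideanSpace.inner_eq_star_dotProduct, dotProduct_comm _ y.ofLp]

lemma cross_self_eq_zero (x : V) : cross x x = 0 := by
  simp [cross]

lemma cross_swap (x y : V) : cross y x = -cross x y := by
  rw [cross, ← cross_anticomm, WithLp.toLp_neg, cross]

lemma inner_cross_cross (x y z w : V) :
    ⟪cross x y, cross z w⟫ = ⟪x, z⟫ * ⟪y, w⟫ - ⟪x, w⟫ * ⟪y, z⟫ := by
  simp only [cross, EuclideanSpace.inner_eq_star_dotProduct, star_trivial, cross_dot_cross]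
  ring

lemma inner_cross_rotate (x y z : V) : ⟪x, cross y z⟫ = ⟪y, cross z x⟫ := by
  simp only [cross, EuclideanSpace.inner_eq_star_dotProduct, star_trivial,
    dotProduct_comm _ x.ofLp, dotProduct_comm _ y.ofLp, triple_product_permutation x.ofLp]

/-- Both sides are the Gram determinant of the triples `(x, y, u)` and `(x, y, w)`. -/
lemma inner_cross_mul_inner_cross (x y u w : V) : ⟪cross x y, u⟫ * ⟪cross x y, w⟫ =
    ⟪u, w⟫ * (⟪x, x⟫ * ⟪y, y⟫ - ⟪x, y⟫ ^ 2) - ⟪x, u⟫ * ⟪x, w⟫ * ⟪y, y⟫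
      - ⟪y, u⟫ * ⟪y, w⟫ * ⟪x, x⟫ + ⟪x, y⟫ * (⟪x, u⟫ * ⟪y, w⟫ + ⟪y, u⟫ * ⟪x, w⟫) := by
  simp only [cross, cross_apply, PiLp.inner_apply, Fin.sum_univ_three, RCLike.inner_apply,
    conj_trivial, Matrix.cons_val]
  ring

end CrossProduct

section CommonLinesKernel

lemma norm_S2 (x : S2) : ‖(x : V)‖ = 1 := norm_eq_of_mem_sphere x

lemma inner_self_S2 (x : S2) : ⟪(x : V), (x : V)⟫ = 1 := by
  rw [real_inner_self_eq_norm_sq, norm_S2, one_pow]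

lemma sq_inner_S2_le_one (x y : S2) : ⟪(x : V), (y : V)⟫ ^ 2 ≤ 1 := by
  simpa [norm_S2] using abs_real_inner_le_norm (x : V) (y : V)

lemma plane_starProjection_apply (x : S2) (v : V) :
    (plane x).starProjection v = v - ⟪(x : V), v⟫ • (x : V) := by
  simp [plane, starProjection_orthogonal, starProjection_unit_singleton ℝ (norm_S2 x)]

lemma inner_plane_starProjection (x : S2) (v w : V) :
    ⟪v, (plane x).starProjection w⟫ = ⟪v, w⟫ - ⟪(x : V), v⟫ * ⟪(x : V), w⟫ := by
  rw [plane_starProjection_apply, inner_sub_right, real_inner_smul_right, real_inner_comm v,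
    mul_comm]

lemma norm_sq_plane_starProjection (x : S2) (v : V) :
    ‖(plane x).starProjection v‖ ^ 2 = ‖v‖ ^ 2 - ⟪(x : V), v⟫ ^ 2 := by
  rw [← inner_starProjection_eq_norm_sq, inner_plane_starProjection, real_inner_self_eq_norm_sq,
    sq ⟪(x : V), v⟫]

lemma mem_cline_iff {x y : S2} {v : V} :
    v ∈ cline x y ↔ ⟪(x : V), v⟫ = 0 ∧ ⟪(y : V), v⟫ = 0 := by
  simp only [cline, plane, mem_inf, mem_orthogonal_singleton_iff_inner_right]

lemma Cker_apply (x y : S2) (v : V) : Cker x y v = (cline x y).starProjection v := rfl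

lemma inner_Cker (x y : S2) (v w : V) : ⟪v, Cker x y w⟫ = ⟪Cker x y v, w⟫ :=
  ((cline x y).inner_starProjection_left_eq_right v w).symm

lemma Cker_comm (x y : S2) : Cker x y = Cker y x := by
  ext1 v
  simp only [Cker_apply, cline, inf_comm]

lemma inner_Cker_self_nonneg (x y : S2) (v : V) : 0 ≤ ⟪v, Cker x y v⟫ := by
  rw [inner_Cker]
  exact re_inner_starProjection_nonneg (cline x y) v

lemma Cker_plane_starProjection_right (x y : S2) (v : V) :
    Cker x y ((plane y).starProjection v) = Cker x y v :=
  DFunLike.congr_fun (starProjection_comp_starProjection_of_le inf_le_right) v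

lemma inner_plane_starProjection_Cker (x y : S2) (v w : V) :
    ⟪(plane x).starProjection v, Cker x y w⟫ = ⟪v, Cker x y w⟫ := by
  rw [inner_Cker, inner_Cker, Cker_comm, Cker_plane_starProjection_right]

/-- The common line of `x` and `y` is spanned by `x × y`, whose squared norm is `1 - ⟪x, y⟫²`. -/
lemma one_sub_sq_inner_smul_Cker (x y : S2) (v : V) :
    (1 - ⟪(x : V), (y : V)⟫ ^ 2) • Cker x y v = ⟪cross x y, v⟫ • cross x y := by
  rw [← map_smul, Cker_apply]
  refine eq_starProjection_of_mem_of_inner_eq_zero ?_ fun u hu => ?_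
  · exact smul_mem _ _ (mem_cline_iff.mpr ⟨inner_cross_left _ _, inner_cross_right _ _⟩)
  · obtain ⟨hxu, hyu⟩ := mem_cline_iff.mp hu
    rw [inner_sub_left, real_inner_smul_left, real_inner_smul_left, inner_cross_mul_inner_cross,
      hxu, hyu, inner_self_S2, inner_self_S2]
    ring

lemma one_sub_sq_inner_mul_inner_Cker (x y : S2) (v w : V) :
    (1 - ⟪(x : V), (y : V)⟫ ^ 2) * ⟪v, Cker x y w⟫ = ⟪cross x y, v⟫ * ⟪cross x y, w⟫ := by
  rw [← real_inner_smul_right, one_sub_sq_inner_smul_Cker, real_inner_smul_right,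
    real_inner_comm v, mul_comm]

lemma mul_sq_inner_cross_le_inner_Cker (x y : S2) (v : V) :
    (1 + ⟪(x : V), (y : V)⟫ ^ 2) * ⟪cross x y, v⟫ ^ 2 ≤ ⟪v, Cker x y v⟫ := by
  have form_nonneg := inner_Cker_self_nonneg x y v
  calc (1 + ⟪(x : V), (y : V)⟫ ^ 2) * ⟪cross x y, v⟫ ^ 2
      = (1 - (⟪(x : V), (y : V)⟫ ^ 2) ^ 2) * ⟪v, Cker x y v⟫ := by
        rw [sq ⟪cross x y, v⟫, ← one_sub_sq_inner_mul_inner_Cker]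
        ring
    _ ≤ ⟪v, Cker x y v⟫ := mul_le_of_le_one_left form_nonneg (sub_le_self _ (sq_nonneg _))

lemma cline_eq_plane_of_sq_inner_eq_one {x y : S2} (h : ⟪(x : V), (y : V)⟫ ^ 2 = 1) :
    cline x y = plane y := by
  have eq_smul : (y : V) = ⟪(x : V), (y : V)⟫ • (x : V) := by
    have norm_sq_sub : ‖(y : V) - ⟪(x : V), (y : V)⟫ • (x : V)‖ ^ 2 = 0 := by
      rw [← plane_starProjection_apply, norm_sq_plane_starProjection, norm_S2, h]
      norm_num
    exact sub_eq_zero.mp (norm_eq_zero.mp (sq_eq_zero_iff.mp norm_sq_sub))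
  have inner_ne_zero : ⟪(x : V), (y : V)⟫ ≠ 0 := by
    intro h0
    simp [h0] at h
  have plane_eq : plane y = plane x := by
    rw [plane, plane, eq_smul, span_singleton_smul_eq (IsUnit.mk0 _ inner_ne_zero)]
  rw [cline, plane_eq, inf_idem]

lemma norm_cross_S2_le (x : S2) (v : V) : ‖cross x v‖ ≤ ‖v‖ := by
  rw [← sq_le_sq₀ (norm_nonneg _) (norm_nonneg _), ← real_inner_self_eq_norm_sq,
    inner_cross_cross, inner_self_S2, real_inner_self_eq_norm_sq, real_inner_comm, one_mul]
  exact sub_le_self _ (mul_self_nonneg _)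

lemma inner_plane_starProjection_plane_starProjection (x y : S2) (v w : V) :
    ⟪(plane x).starProjection v, (plane y).starProjection w⟫ =
      ⟪v, w⟫ - ⟪(x : V), v⟫ * ⟪(x : V), w⟫ - ⟪(y : V), v⟫ * ⟪(y : V), w⟫
        + ⟪(x : V), (y : V)⟫ * (⟪(x : V), v⟫ * ⟪(y : V), w⟫) := by
  rw [inner_plane_starProjection, plane_starProjection_apply, inner_sub_left, inner_sub_right,
    real_inner_smul_left, real_inner_smul_right, real_inner_comm x.1 y.1]
  ring

lemma abs_inner_Cker_sub_le_of_sq_inner_eq_one {x y : S2} (h : ⟪(x : V), (y : V)⟫ ^ 2 = 1)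
    (v w : V) :
    |⟪v, Cker x y w⟫ - (⟪(plane x).starProjection v, (plane y).starProjection w⟫
      - ⟪(x : V), (y : V)⟫ / 2 * ⟪cross x v, cross y w⟫)|
      ≤ |⟪(x : V), (y : V)⟫| / 2 * (‖v‖ * ‖w‖) := by
  have inner_Cker_eq : ⟪v, Cker x y w⟫ =
      ⟪(plane x).starProjection v, (plane y).starProjection w⟫ := by
    rw [← cline_eq_plane_of_sq_inner_eq_one h, ← Cker_apply, inner_plane_starProjection_Cker]
  rw [inner_Cker_eq, sub_sub_cancel, abs_mul, abs_div, abs_two]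
  gcongr
  exact (abs_real_inner_le_norm _ _).trans (by gcongr <;> exact norm_cross_S2_le _ _)

lemma sq_inner_cross_add_sq_le (x y : S2) (v : V) :
    ⟪cross x y, v⟫ ^ 2 + (⟪(x : V), (y : V)⟫ * ⟪(x : V), v⟫ - ⟪(y : V), v⟫) ^ 2 ≤
      (1 - ⟪(x : V), (y : V)⟫ ^ 2) * ‖v‖ ^ 2 := by
  calc ⟪cross x y, v⟫ ^ 2 + (⟪(x : V), (y : V)⟫ * ⟪(x : V), v⟫ - ⟪(y : V), v⟫) ^ 2
      = (1 - ⟪(x : V), (y : V)⟫ ^ 2) * (‖v‖ ^ 2 - ⟪(x : V), v⟫ ^ 2) := by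
        rw [sq ⟪cross x y, v⟫, inner_cross_mul_inner_cross, inner_self_S2, inner_self_S2,
          real_inner_self_eq_norm_sq]
        ring
    _ ≤ (1 - ⟪(x : V), (y : V)⟫ ^ 2) * ‖v‖ ^ 2 :=
        mul_le_mul_of_nonneg_left (sub_le_self _ (sq_nonneg _))
          (sub_nonneg.mpr (sq_inner_S2_le_one x y))

lemma sq_mul_sub_mul_le {t : ℝ} (ht : t ^ 2 ≤ 1) (a a' b b' : ℝ) :
    (t * (a * a') - b * b') ^ 2 ≤ (a ^ 2 + b ^ 2) * (a' ^ 2 + b' ^ 2) := by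
  calc (t * (a * a') - b * b') ^ 2
      ≤ ((t * a) ^ 2 + b ^ 2) * (a' ^ 2 + b' ^ 2) := by
        linarith [sq_nonneg (t * a * b' + b * a')]
    _ ≤ (a ^ 2 + b ^ 2) * (a' ^ 2 + b' ^ 2) := by
        rw [mul_pow]
        gcongr
        exact mul_le_of_le_one_left (sq_nonneg a) ht

/-- The remainder is `t / 2 * (t * a * a' - b * b') / (1 - t ^ 2)`, where `t = ⟪x, y⟫`,
`a = ⟪x × y, v⟫`, `a' = ⟪x × y, w⟫`, `b = ⟪x × (x × y), v⟫` and `b' = ⟪y × (x × y), w⟫`. -/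
lemma abs_inner_Cker_sub_le (x y : S2) (v w : V) :
    |⟪v, Cker x y w⟫ - (⟪(plane x).starProjection v, (plane y).starProjection w⟫
      - ⟪(x : V), (y : V)⟫ / 2 * ⟪cross x v, cross y w⟫)|
      ≤ |⟪(x : V), (y : V)⟫| / 2 * (‖v‖ * ‖w‖) := by
  rcases (sq_inner_S2_le_one x y).eq_or_lt with h | h
  · exact abs_inner_Cker_sub_le_of_sq_inner_eq_one h v w
  have hD : 0 < 1 - ⟪(x : V), (y : V)⟫ ^ 2 := sub_pos.mpr h
  have frame_v := sq_inner_cross_add_sq_le x y v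
  have frame_w := sq_inner_cross_add_sq_le y x w
  have form := one_sub_sq_inner_mul_inner_Cker x y v w
  have gram := inner_cross_mul_inner_cross (x : V) y v w
  rw [cross_swap, inner_neg_left, neg_sq, sub_sq_comm,
    real_inner_comm (x : V) y] at frame_w
  rw [inner_self_S2, inner_self_S2] at gram
  rw [inner_plane_starProjection_plane_starProjection, inner_cross_cross, real_inner_comm (y : V) v]
  set t := ⟪(x : V), (y : V)⟫
  set a := ⟪cross x y, v⟫
  set a' := ⟪cross x y, w⟫
  set b := t * ⟪(x : V), v⟫ - ⟪(y : V), v⟫ with hb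
  set b' := ⟪(x : V), w⟫ - t * ⟪(y : V), w⟫ with hb'
  set R := ⟪v, Cker x y w⟫ - _ with hR
  have remainder_eq : (1 - t ^ 2) * R = t / 2 * (t * (a * a') - b * b') := by
    rw [hR, hb, hb']
    linear_combination form + (1 - t ^ 2 / 2) * gram
  have sq_le : (t * (a * a') - b * b') ^ 2 ≤ ((1 - t ^ 2) * (‖v‖ * ‖w‖)) ^ 2 := by
    calc (t * (a * a') - b * b') ^ 2
        ≤ (a ^ 2 + b ^ 2) * (a' ^ 2 + b' ^ 2) := sq_mul_sub_mul_le h.le _ _ _ _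
      _ ≤ ((1 - t ^ 2) * ‖v‖ ^ 2) * ((1 - t ^ 2) * ‖w‖ ^ 2) := by
          gcongr
      _ = ((1 - t ^ 2) * (‖v‖ * ‖w‖)) ^ 2 := by ring
  refine le_of_mul_le_mul_left ?_ hD
  calc (1 - t ^ 2) * |R| = |t| / 2 * |t * (a * a') - b * b'| := by
        rw [← abs_two, ← abs_div, ← abs_mul, ← remainder_eq, abs_mul, abs_of_pos hD]
    _ ≤ |t| / 2 * ((1 - t ^ 2) * (‖v‖ * ‖w‖)) := by
        gcongr
        exact abs_le_of_sq_le_sq sq_le (by positivity)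
    _ = (1 - t ^ 2) * (|t| / 2 * (‖v‖ * ‖w‖)) := by ring

end CommonLinesKernel

section SpectrumOfCN

variable {ι : Type*} [Fintype ι]

lemma sum_sum_inner_Cker_le (p : ι → S2) (s : ι → V)
    (hs : ∑ i, (plane (p i)).starProjection (s i) = 0) :
    ∑ i, ∑ j, ⟪s i, Cker (p i) (p j) (s j)⟫ ≤
      √(∑ i, ∑ j, ⟪(p i : V), (p j : V)⟫ ^ 2) / 2 * ∑ i, ‖s i‖ ^ 2 := by
  have main_term : ∑ i, ∑ j,
      ⟪(plane (p i)).starProjection (s i), (plane (p j)).starProjection (s j)⟫ = 0 := by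
    simp only [← inner_sum, ← sum_inner, hs, inner_zero_left]
  have cross_term : 0 ≤ ∑ i, ∑ j,
      ⟪(p i : V), (p j : V)⟫ * ⟪cross (p i) (s i), cross (p j) (s j)⟫ :=
    sum_sum_inner_mul_inner_nonneg _ _
  have remainder : ∑ i, ∑ j, |⟪(p i : V), (p j : V)⟫| * (‖s i‖ * ‖s j‖) ≤
      √(∑ i, ∑ j, ⟪(p i : V), (p j : V)⟫ ^ 2) * ∑ i, ‖s i‖ ^ 2 := by
    simpa only [sq_abs] using
      sum_sum_mul_le_sqrt_mul (fun i j => |⟪(p i : V), (p j : V)⟫|) (fun i => ‖s i‖)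
  calc ∑ i, ∑ j, ⟪s i, Cker (p i) (p j) (s j)⟫
      ≤ ∑ i, ∑ j, (⟪(plane (p i)).starProjection (s i), (plane (p j)).starProjection (s j)⟫
          - (⟪(p i : V), (p j : V)⟫ * ⟪cross (p i) (s i), cross (p j) (s j)⟫) / 2
          + (|⟪(p i : V), (p j : V)⟫| * (‖s i‖ * ‖s j‖)) / 2) := by
        gcongr with i _ j _
        have := (le_abs_self _).trans (abs_inner_Cker_sub_le (p i) (p j) (s i) (s j))
        linarith
    _ ≤ √(∑ i, ∑ j, ⟪(p i : V), (p j : V)⟫ ^ 2) / 2 * ∑ i, ‖s i‖ ^ 2 := by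
        simp only [Finset.sum_add_distrib, Finset.sum_sub_distrib, ← Finset.sum_div, main_term]
        linarith

/-- The part of the quadratic form of `C_N - 1/3` on the vectors `(P_{x_i} v)_i` which the points
`x` and `y` contribute, with the form of `C(x, y)` replaced by the lower bound of
`mul_sq_inner_cross_le_inner_Cker`, which is continuous in `x` and `y`. -/
def excess (x y : S2) : V →L[ℝ] V :=
  (1 + ⟪(x : V), (y : V)⟫ ^ 2) • InnerProductSpace.rankOne ℝ (cross x y) (cross x y)
    - (3 : ℝ)⁻¹ • (plane y).starProjection

lemma inner_excess (x y : S2) (v : V) :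
    ⟪v, excess x y v⟫ = (1 + ⟪(x : V), (y : V)⟫ ^ 2) * ⟪cross x y, v⟫ ^ 2
      - 3⁻¹ * ‖(plane y).starProjection v‖ ^ 2 := by
  rw [← inner_starProjection_eq_norm_sq]
  simp only [excess, sub_apply, smul_apply, inner_sub_right, real_inner_smul_right,
    InnerProductSpace.rankOne_apply, real_inner_comm v, sq]

/-- `CN N p` as an operator on the Hilbert sum `⊕ᵢ V`, whose inner product makes it symmetric; the
norm of `Fin N → V` is the supremum norm. -/
def CNHilbert (N : ℕ) (p : Fin N → S2) :
    PiLp 2 (fun _ : Fin N => V) →ₗ[ℝ] PiLp 2 (fun _ : Fin N => V) :=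
  (WithLp.linearEquiv 2 ℝ (Fin N → V)).symm.conj (CN N p)

variable {N : ℕ} (p : Fin N → S2)

lemma finrank_VN : Module.finrank ℝ (VN N p) =
    Module.finrank ℝ (spectralAbove (CNHilbert N p) (1 / 3)) := by
  rw [CNHilbert, ← spectralAbove.map_conj, LinearEquiv.finrank_map_eq]
  rfl

lemma inner_CNHilbert (s s' : PiLp 2 (fun _ : Fin N => V)) :
    ⟪CNHilbert N p s, s'⟫ =
      (N : ℝ)⁻¹ * ∑ i, ∑ j ∈ Finset.univ.erase i, ⟪s' i, Cker (p i) (p j) (s j)⟫ := by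
  have coord (i : Fin N) : CNHilbert N p s i =
      (N : ℝ)⁻¹ • ∑ j ∈ Finset.univ.erase i, Cker (p i) (p j) (s j) := by
    simp [CNHilbert, CN, LinearEquiv.conj_apply_apply]
  rw [PiLp.inner_apply, Finset.mul_sum]
  refine Finset.sum_congr rfl fun i _ => ?_
  rw [coord, real_inner_comm, real_inner_smul_right, inner_sum]

lemma isSymmetric_CNHilbert : (CNHilbert N p).IsSymmetric := by
  intro s s'
  rw [real_inner_comm _ s, inner_CNHilbert, inner_CNHilbert]
  congr 1
  rw [Finset.sum_comm' (t' := Finset.univ) (s' := fun j => Finset.univ.erase j)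
    (by simp [eq_comm])]
  refine Finset.sum_congr rfl fun i _ => Finset.sum_congr rfl fun j _ => ?_
  rw [inner_Cker, Cker_comm, real_inner_comm]

lemma finrank_VN_le (hN : 0 < N)
    (h : ∑ i, ∑ j, ⟪(p i : V), (p j : V)⟫ ^ 2 ≤ 4 / 9 * (N : ℝ) ^ 2) :
    Module.finrank ℝ (VN N p) ≤ 3 := by
  let L : PiLp 2 (fun _ : Fin N => V) →ₗ[ℝ] V :=
    ∑ i, ((plane (p i)).starProjection ∘L PiLp.proj 2 (fun _ : Fin N => V) i).toLinearMap
  have hL (s : PiLp 2 (fun _ : Fin N => V)) (hs : L s = 0) :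
      ⟪CNHilbert N p s, s⟫ ≤ 1 / 3 * ‖s‖ ^ 2 := by
    have sum_eq_zero : ∑ i, (plane (p i)).starProjection (s i) = 0 := by
      simpa [L] using hs
    have sqrt_le : √(∑ i, ∑ j, ⟪(p i : V), (p j : V)⟫ ^ 2) ≤ 2 / 3 * N := by
      exact Real.sqrt_le_iff.mpr ⟨by positivity, h.trans_eq (by ring)⟩
    rw [inner_CNHilbert, PiLp.norm_sq_eq_of_L2]
    calc (N : ℝ)⁻¹ * ∑ i, ∑ j ∈ Finset.univ.erase i, ⟪s i, Cker (p i) (p j) (s j)⟫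
        ≤ (N : ℝ)⁻¹ * ∑ i, ∑ j, ⟪s i, Cker (p i) (p j) (s j)⟫ := by
          gcongr with i
          · rintro j - hj
            obtain rfl : j = i := by simpa using hj
            exact inner_Cker_self_nonneg _ _ _
          · exact Finset.erase_subset _ _
      _ ≤ (N : ℝ)⁻¹ * (2 / 3 * N / 2 * ∑ i, ‖s i‖ ^ 2) := by
          gcongr
          refine (sum_sum_inner_Cker_le p s sum_eq_zero).trans ?_
          gcongr
      _ = 1 / 3 * ∑ i, ‖s i‖ ^ 2 := by field_simp
  rw [finrank_VN]
  exact (spectralAbove.finrank_le (isSymmetric_CNHilbert p) L hL).trans_eq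
    finrank_euclideanSpace_fin

lemma le_finrank_VN (h : ∀ v, v ≠ 0 → 0 < ∑ i, ∑ j, ⟪v, excess (p i) (p j) v⟫) :
    3 ≤ Module.finrank ℝ (VN N p) := by
  let J : V →ₗ[ℝ] PiLp 2 (fun _ : Fin N => V) :=
    (WithLp.linearEquiv 2 ℝ (Fin N → V)).symm.toLinearMap ∘ₗ
      LinearMap.pi fun i => (plane (p i)).starProjection.toLinearMap
  have hJ (v : V) (hv : v ≠ 0) : 1 / 3 * ‖J v‖ ^ 2 < ⟪CNHilbert N p (J v), J v⟫ := by
    have hN : 0 < N := Nat.pos_of_ne_zero (by rintro rfl; simpa using h v hv)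
    have norm_sq_J : ‖J v‖ ^ 2 = ∑ j, ‖(plane (p j)).starProjection v‖ ^ 2 :=
      PiLp.norm_sq_eq_of_L2 _ _
    have sum_excess : ∑ i, ∑ j, ⟪v, excess (p i) (p j) v⟫ =
        ∑ i, ∑ j, (1 + ⟪(p i : V), (p j : V)⟫ ^ 2) * ⟪cross (p i) (p j), v⟫ ^ 2
          - 3⁻¹ * (N * ‖J v‖ ^ 2) := by
      simp only [inner_excess, Finset.sum_sub_distrib, ← Finset.mul_sum, ← norm_sq_J,
        Finset.sum_const, Finset.card_univ, Fintype.card_fin, nsmul_eq_mul]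
    have sum_le : ∑ i, ∑ j, (1 + ⟪(p i : V), (p j : V)⟫ ^ 2) * ⟪cross (p i) (p j), v⟫ ^ 2 ≤
        ∑ i, ∑ j ∈ Finset.univ.erase i, ⟪J v i, Cker (p i) (p j) (J v j)⟫ := by
      refine Finset.sum_le_sum fun i _ => ?_
      rw [← Finset.sum_erase Finset.univ (a := i) (by simp [cross_self_eq_zero])]
      refine Finset.sum_le_sum fun j _ => ?_
      calc (1 + ⟪(p i : V), (p j : V)⟫ ^ 2) * ⟪cross (p i) (p j), v⟫ ^ 2
          ≤ ⟪v, Cker (p i) (p j) v⟫ := mul_sq_inner_cross_le_inner_Cker _ _ _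
        _ = ⟪J v i, Cker (p i) (p j) (J v j)⟫ := by
            rw [← inner_plane_starProjection_Cker, ← Cker_plane_starProjection_right]
            rfl
    rw [inner_CNHilbert, lt_inv_mul_iff₀ (Nat.cast_pos.mpr hN), one_div, mul_left_comm]
    exact (sub_pos.mp (sum_excess ▸ h v hv)).trans_le sum_le
  rw [finrank_VN]
  exact finrank_euclideanSpace_fin.symm.trans_le
    (spectralAbove.le_finrank (isSymmetric_CNHilbert p) J hJ)

end SpectrumOfCN

section CompactSpace

variable {X F : Type*} [MeasurableSpace X] [TopologicalSpace X] [CompactSpace X] [BorelSpace X]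
  [NormedAddCommGroup F] {μ : Measure X} [IsFiniteMeasure μ]

lemma integrable_of_compactSpace {g : X → F} (hg : Continuous g) : Integrable g μ :=
  hg.integrable_of_hasCompactSupport (HasCompactSupport.of_compactSpace g)

variable [NormedSpace ℝ F] [CompleteSpace F]

lemma integrable_integral_kernel (h : C(X × X, F)) :
    Integrable (fun b => ∫ a, h (a, b) ∂μ) μ := by
  have integrable_curry : Integrable h.curry μ := integrable_of_compactSpace h.curry.continuous
  have integral_eq : (fun b => ∫ a, h (a, b) ∂μ) = ⇑(∫ a, h.curry a ∂μ) :=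
    funext fun b => (ContinuousMap.integral_apply integrable_curry b).symm
  exact integral_eq ▸ integrable_of_compactSpace (ContinuousMap.continuous _)

lemma map_integral_integral_kernel {G : Type*} [NormedAddCommGroup G] [NormedSpace ℝ G]
    [CompleteSpace G] (φ : F →L[ℝ] G) (h : C(X × X, F)) :
    φ (∫ b, ∫ a, h (a, b) ∂μ ∂μ) = ∫ b, ∫ a, φ (h (a, b)) ∂μ ∂μ := by
  rw [← φ.integral_comp_comm (integrable_integral_kernel h)]
  congr! with b
  exact (φ.integral_comp_comm
    (integrable_of_compactSpace (by fun_prop))).symm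

end CompactSpace

section StrongLaw

open ProbabilityTheory Filter Topology

variable {Ω X F : Type*} [MeasurableSpace Ω] {P : Measure Ω} [MeasurableSpace X] {μ : Measure X}
  [IsProbabilityMeasure μ] {x : ℕ → Ω → X}

lemma tendsto_measure_pi_of_ae_eventually (hlaw : ∀ i, HasLaw (x i) μ P)
    (hindep : iIndepFun x P) (A : (N : ℕ) → Set (Fin N → X))
    (hA : ∀ᵐ ω ∂P, ∀ᶠ N in atTop, (fun i : Fin N => x i ω) ∈ A N) :
    Tendsto (fun N => Measure.pi (fun _ : Fin N => μ) (A N)) atTop (𝓝 1) := by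
  have : IsProbabilityMeasure P := (hlaw 0).isProbabilityMeasure
  have hlaw_pi (N : ℕ) : HasLaw (fun ω (i : Fin N) => x i ω) (Measure.pi fun _ => μ) P :=
    (hindep.precomp Fin.val_injective).hasLaw_pi fun i => hlaw i
  let G (N : ℕ) : Set Ω := {ω | ∀ n ≥ N, (fun i : Fin n => x i ω) ∈ A n}
  have monotone_G : Monotone G := fun N N' hN ω hω n hn => hω n (hN.trans hn)
  have measure_iUnion_G : P (⋃ N, G N) = 1 := by
    rw [← measure_univ (μ := P)]
    refine measure_congr (eventuallyEq_univ.mpr ?_)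
    filter_upwards [hA] with ω hω
    obtain ⟨N, hN⟩ := eventually_atTop.mp hω
    exact Set.mem_iUnion.mpr ⟨N, hN⟩
  have le_pi (N : ℕ) : P (G N) ≤ Measure.pi (fun _ : Fin N => μ) (A N) := by
    rw [← (hlaw_pi N).map_eq]
    exact (measure_mono fun ω (hω : ω ∈ G N) => hω N le_rfl).trans
      (Measure.le_map_apply (hlaw_pi N).aemeasurable _)
  refine tendsto_of_tendsto_of_tendsto_of_le_of_le ?_ tendsto_const_nhds le_pi fun N => prob_le_one
  exact measure_iUnion_G ▸ tendsto_measure_iUnion_atTop monotone_G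

variable [TopologicalSpace X] [CompactSpace X] [BorelSpace X]
  [NormedAddCommGroup F] [NormedSpace ℝ F] [CompleteSpace F]

lemma strong_law_continuousMap (hlaw : ∀ i, HasLaw (x i) μ P)
    (hindep : Pairwise fun i j => IndepFun (x i) (x j) P) (g : C(X, F)) :
    ∀ᵐ ω ∂P, Tendsto (fun n : ℕ => (n : ℝ)⁻¹ • ∑ i ∈ Finset.range n, g (x i ω)) atTop
      (𝓝 (∫ a, g a ∂μ)) := by
  borelize F
  have integrable_g : Integrable g μ := integrable_of_compactSpace g.continuous
  have integral_g : ∫ ω, g (x 0 ω) ∂P = ∫ a, g a ∂μ :=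
    (hlaw 0).integral_comp integrable_g.aestronglyMeasurable
  rw [← integral_g]
  refine strong_law_ae (fun i ω => g (x i ω)) ?_ ?_ ?_
  · refine Integrable.comp_aemeasurable ?_ (hlaw 0).aemeasurable
    rwa [(hlaw 0).map_eq]
  · exact fun i j hij => (hindep hij).comp g.measurable g.measurable
  · exact fun i => ((hlaw i).identDistrib (hlaw 0)).comp g.measurable

/-- The averages of `h (x i, ·)` converge in the Banach space `C(X, F)`, so that they may be
evaluated at the random points `x j`. -/
theorem strong_law_kernel (hlaw : ∀ i, HasLaw (x i) μ P)
    (hindep : Pairwise fun i j => IndepFun (x i) (x j) P) (h : C(X × X, F)) :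
    ∀ᵐ ω ∂P, Tendsto (fun n : ℕ => ((n : ℝ) ^ 2)⁻¹ •
        ∑ i ∈ Finset.range n, ∑ j ∈ Finset.range n, h (x i ω, x j ω)) atTop
      (𝓝 (∫ b, ∫ a, h (a, b) ∂μ ∂μ)) := by
  set A : C(X, F) := ∫ a, h.curry a ∂μ
  have integrable_curry : Integrable h.curry μ := integrable_of_compactSpace h.curry.continuous
  have A_apply (b : X) : A b = ∫ a, h (a, b) ∂μ :=
    ContinuousMap.integral_apply integrable_curry b
  simp only [← A_apply]
  filter_upwards [strong_law_continuousMap hlaw hindep h.curry,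
    strong_law_continuousMap hlaw hindep A] with ω tendsto_curry tendsto_A
  set B : ℕ → C(X, F) := fun n => (n : ℝ)⁻¹ • ∑ i ∈ Finset.range n, h.curry (x i ω)
  have average_eq (n : ℕ) :
      ((n : ℝ) ^ 2)⁻¹ • ∑ i ∈ Finset.range n, ∑ j ∈ Finset.range n, h (x i ω, x j ω) =
        (n : ℝ)⁻¹ • ∑ j ∈ Finset.range n, (B n - A) (x j ω)
          + (n : ℝ)⁻¹ • ∑ j ∈ Finset.range n, A (x j ω) := by
    rw [Finset.sum_comm]
    simp [B, ← smul_add, ← Finset.smul_sum, smul_smul, sq]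
  have norm_le (n : ℕ) : ‖(n : ℝ)⁻¹ • ∑ j ∈ Finset.range n, (B n - A) (x j ω)‖ ≤ ‖B n - A‖ := by
    rw [norm_smul, norm_inv, RCLike.norm_natCast]
    refine inv_mul_le_of_le_mul₀ n.cast_nonneg (norm_nonneg _) ?_
    simpa using norm_sum_le_of_le (Finset.range n)
      fun j _ => (B n - A).norm_coe_le_norm (x j ω)
  have tendsto_error : Tendsto (fun n => ‖B n - A‖) atTop (𝓝 0) :=
    tendsto_iff_norm_sub_tendsto_zero.mp tendsto_curry
  simpa only [average_eq, zero_add] using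
    (squeeze_zero_norm norm_le tendsto_error).add tendsto_A

end StrongLaw

lemma eventually_forall_inner_pos {α E : Type*} [NormedAddCommGroup E] [InnerProductSpace ℝ E]
    {l : Filter α} {T : α → E →L[ℝ] E} {T₀ : E →L[ℝ] E} {c : ℝ} (hc : 0 < c)
    (hT : Filter.Tendsto T l (nhds T₀)) (hT₀ : ∀ v, c * ‖v‖ ^ 2 ≤ ⟪v, T₀ v⟫) :
    ∀ᶠ a in l, ∀ v, v ≠ 0 → 0 < ⟪v, T a v⟫ := by
  filter_upwards [hT.eventually (Metric.ball_mem_nhds T₀ hc)] with a ha v hv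
  have dist_lt : ‖T a - T₀‖ < c := mem_ball_iff_norm.mp ha
  have error_le : |⟪v, (T a - T₀) v⟫| ≤ ‖T a - T₀‖ * ‖v‖ ^ 2 := by
    calc |⟪v, (T a - T₀) v⟫| ≤ ‖v‖ * ‖(T a - T₀) v‖ := abs_real_inner_le_norm _ _
      _ ≤ ‖v‖ * (‖T a - T₀‖ * ‖v‖) := by gcongr; exact (T a - T₀).le_opNorm v
      _ = ‖T a - T₀‖ * ‖v‖ ^ 2 := by ring
  calc 0 < (c - ‖T a - T₀‖) * ‖v‖ ^ 2 := mul_pos (sub_pos.mpr dist_lt) (by positivity)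
    _ ≤ ⟪v, T₀ v⟫ - |⟪v, (T a - T₀) v⟫| := by linarith [hT₀ v]
    _ ≤ ⟪v, T₀ v⟫ + ⟪v, (T a - T₀) v⟫ := by linarith [neg_abs_le ⟪v, (T a - T₀) v⟫]
    _ = ⟪v, T a v⟫ := by rw [← inner_add_right, sub_apply, add_sub_cancel]

section AlmostSureDimension

open ProbabilityTheory Filter Topology

lemma continuous_cross : Continuous fun q : V × V => cross q.1 q.2 := by
  unfold cross
  simp only [cross_apply]
  fun_prop

lemma continuous_excess : Continuous fun q : S2 × S2 => excess q.1 q.2 := by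
  have plane_starProjection_eq (y : S2) : (plane y).starProjection =
      ContinuousLinearMap.id ℝ V - InnerProductSpace.rankOne ℝ (y : V) (y : V) := by
    ext1 v
    simp [plane_starProjection_apply]
  have continuous_rankOne : Continuous fun w : V => InnerProductSpace.rankOne ℝ w w :=
    (InnerProductSpace.rankOne ℝ).continuous.clm_apply continuous_id
  have continuous_rankOne_cross : Continuous fun q : S2 × S2 =>
      InnerProductSpace.rankOne ℝ (cross (q.1 : V) q.2) (cross q.1 q.2) :=
    continuous_rankOne.comp (continuous_cross.comp
      (continuous_subtype_val.prodMap continuous_subtype_val))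
  have continuous_rankOne_snd : Continuous fun q : S2 × S2 =>
      InnerProductSpace.rankOne ℝ (q.2 : V) (q.2 : V) :=
    continuous_rankOne.comp (continuous_subtype_val.comp continuous_snd)
  simp only [excess, plane_starProjection_eq]
  fun_prop

theorem ae_eventually_finrank_VN_eq_three {Ω : Type*} [MeasurableSpace Ω] {P : Measure Ω}
    {μ : Measure S2} [IsProbabilityMeasure μ] {x : ℕ → Ω → S2} (hlaw : ∀ i, HasLaw (x i) μ P)
    (hindep : Pairwise fun i j => IndepFun (x i) (x j) P)
    (hinner : ∫ b : S2, ∫ a : S2, ⟪(a : V), (b : V)⟫ ^ 2 ∂μ ∂μ < 4 / 9) {c : ℝ} (hc : 0 < c)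
    (hexcess : ∀ v : V, c * ‖v‖ ^ 2 ≤ ∫ b, ∫ a, ⟪v, excess a b v⟫ ∂μ ∂μ) :
    ∀ᵐ ω ∂P, ∀ᶠ N : ℕ in atTop, Module.finrank ℝ (VN N fun i => x i ω) = 3 := by
  let innerSq : C(S2 × S2, ℝ) := ⟨fun q => ⟪(q.1 : V), (q.2 : V)⟫ ^ 2, by fun_prop⟩
  let excessKernel : C(S2 × S2, V →L[ℝ] V) := ⟨fun q => excess q.1 q.2, continuous_excess⟩
  have le_inner_mean (v : V) :
      c * ‖v‖ ^ 2 ≤ ⟪v, (∫ b, ∫ a, excessKernel (a, b) ∂μ ∂μ) v⟫ :=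
    (hexcess v).trans_eq (map_integral_integral_kernel
      (innerSL ℝ v ∘L ContinuousLinearMap.apply ℝ V v) excessKernel).symm
  filter_upwards [strong_law_kernel hlaw hindep innerSq, strong_law_kernel hlaw hindep excessKernel]
    with ω tendsto_innerSq tendsto_excess
  filter_upwards [eventually_gt_atTop 0, tendsto_innerSq.eventually_le_const hinner,
    eventually_forall_inner_pos hc tendsto_excess le_inner_mean] with N hN innerSq_le excess_pos
  simp only [Finset.sum_range] at innerSq_le excess_pos
  refine le_antisymm (finrank_VN_le _ hN ?_) (le_finrank_VN _ fun v hv => ?_)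
  · rw [smul_eq_mul, inv_mul_le_iff₀ (by positivity), mul_comm] at innerSq_le
    exact innerSq_le
  · have average_pos := excess_pos v hv
    simp only [smul_apply, sum_apply, real_inner_smul_right, inner_sum] at average_pos
    exact pos_of_mul_pos_right average_pos (by positivity)

end AlmostSureDimension

section UniformOnUnitSphere

variable {E : Type*} [NormedAddCommGroup E] [InnerProductSpace ℝ E] [MeasurableSpace E]

/-- A measure on a Euclidean space is uniform on the unit sphere if it is invariant under all linear
isometries and concentrated on the unit vectors.  It is a measure on the whole space, so that
moments are integrals of functions of a vector. -/
structure IsUniformOnUnitSphere (ν : Measure E) : Prop where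
  measurePreserving (g : E ≃ₗᵢ[ℝ] E) : MeasurePreserving g ν ν
  norm_eq_one : ∀ᵐ x ∂ν, ‖x‖ = 1

namespace IsUniformOnUnitSphere

variable [BorelSpace E] {ν : Measure E}

lemma exists_integral_inner_pow_eq [NeZero ν] (hν : IsUniformOnUnitSphere ν) (k : ℕ) :
    ∃ κ : ℝ, ∀ v : E, ∫ x, ⟪v, x⟫ ^ k ∂ν = κ * ‖v‖ ^ k := by
  obtain ⟨u, hu⟩ := hν.norm_eq_one.exists
  refine ⟨∫ x, ⟪u, x⟫ ^ k ∂ν, fun v => ?_⟩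
  let g : E ≃ₗᵢ[ℝ] E := (ℝ ∙ (v - ‖v‖ • u))ᗮ.reflection
  have g_v : g v = ‖v‖ • u := reflection_sub (by rw [norm_smul, norm_norm, hu, mul_one])
  have inner_g (x : E) : ⟪v, g x⟫ = ‖v‖ * ⟪u, x⟫ := by
    rw [← real_inner_smul_left, ← g_v, ← g.inner_map_map v, reflection_reflection]
  calc ∫ x, ⟪v, x⟫ ^ k ∂ν = ∫ x, ⟪v, g x⟫ ^ k ∂ν :=
        ((hν.measurePreserving g).integral_comp g.toHomeomorph.measurableEmbedding _).symm
    _ = (∫ x, ⟪u, x⟫ ^ k ∂ν) * ‖v‖ ^ k := by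
        simp only [inner_g, mul_pow, mul_comm (‖v‖ ^ k), integral_mul_const]

variable [FiniteDimensional ℝ E]

lemma integrable_of_continuous [IsFiniteMeasure ν] (hν : IsUniformOnUnitSphere ν) {f : E → ℝ}
    (hf : Continuous f) : Integrable f ν := by
  have restrict_eq : ν.restrict (Metric.sphere 0 1) = ν :=
    Measure.restrict_eq_self_of_ae_mem (by simpa using hν.norm_eq_one)
  rw [← restrict_eq]
  exact hf.continuousOn.integrableOn_compact (isCompact_sphere 0 1)

variable [IsProbabilityMeasure ν]

lemma finrank_mul_integral_inner_sq (hν : IsUniformOnUnitSphere ν) (v : E) :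
    Module.finrank ℝ E * ∫ x, ⟪v, x⟫ ^ 2 ∂ν = ‖v‖ ^ 2 := by
  obtain ⟨κ, hκ⟩ := hν.exists_integral_inner_pow_eq 2
  have b := stdOrthonormalBasis ℝ E
  have sum_moments : Module.finrank ℝ E * κ = 1 := by
    calc Module.finrank ℝ E * κ = ∑ i, ∫ x, ⟪b i, x⟫ ^ 2 ∂ν := by simp [hκ]
      _ = ∫ x, ‖x‖ ^ 2 ∂ν := by
          rw [← integral_finsetSum _ fun i _ => hν.integrable_of_continuous (by fun_prop)]
          simp only [b.sum_sq_inner_right]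
      _ = ∫ _, 1 ∂ν := integral_congr_ae (hν.norm_eq_one.mono fun x hx => by simp [hx])
      _ = 1 := by simp
  rw [hκ, ← mul_assoc, sum_moments, one_mul]

/-- Polarization of the fourth moment, by the parallelogram-type identity
`(s + t)⁴ + (s - t)⁴ = 2 s⁴ + 12 s² t² + 2 t⁴`. -/
lemma exists_integral_inner_sq_mul_inner_sq_eq (hν : IsUniformOnUnitSphere ν) : ∃ κ : ℝ, ∀ v w : E,
    ∫ x, ⟪v, x⟫ ^ 2 * ⟪w, x⟫ ^ 2 ∂ν = κ * (‖v‖ ^ 2 * ‖w‖ ^ 2 + 2 * ⟪v, w⟫ ^ 2) := by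
  obtain ⟨κ, hκ⟩ := hν.exists_integral_inner_pow_eq 4
  refine ⟨κ / 3, fun v w => ?_⟩
  have polarization : ∫ x, ⟪v + w, x⟫ ^ 4 ∂ν + ∫ x, ⟪v - w, x⟫ ^ 4 ∂ν =
      2 * ∫ x, ⟪v, x⟫ ^ 4 ∂ν + 12 * ∫ x, ⟪v, x⟫ ^ 2 * ⟪w, x⟫ ^ 2 ∂ν
        + 2 * ∫ x, ⟪w, x⟫ ^ 4 ∂ν := by
    simp only [← integral_const_mul]
    rw [← integral_add, ← integral_add, ← integral_add]
    · congr! 2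
      rw [inner_add_left, inner_sub_left]
      ring
    all_goals exact hν.integrable_of_continuous (by fun_prop)
  have norm_pow_four (u : E) : ‖u‖ ^ 4 = (‖u‖ ^ 2) ^ 2 := by ring
  simp only [hκ, norm_pow_four, norm_add_sq_real, norm_sub_sq_real] at polarization
  linarith

lemma finrank_mul_integral_inner_sq_mul_inner_sq (hν : IsUniformOnUnitSphere ν) (v w : E) :
    Module.finrank ℝ E * (Module.finrank ℝ E + 2) * ∫ x, ⟪v, x⟫ ^ 2 * ⟪w, x⟫ ^ 2 ∂ν =
      ‖v‖ ^ 2 * ‖w‖ ^ 2 + 2 * ⟪v, w⟫ ^ 2 := by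
  obtain ⟨κ, hκ⟩ := hν.exists_integral_inner_sq_mul_inner_sq_eq
  obtain ⟨u, hu⟩ := hν.norm_eq_one.exists
  have b := stdOrthonormalBasis ℝ E
  have sum_moments : (Module.finrank ℝ E + 2) * κ = ∫ x, ⟪u, x⟫ ^ 2 ∂ν := by
    calc (Module.finrank ℝ E + 2) * κ = ∑ i, ∫ x, ⟪u, x⟫ ^ 2 * ⟪b i, x⟫ ^ 2 ∂ν := by
          simp [hκ, hu, ← Finset.mul_sum, Finset.sum_add_distrib, b.sum_sq_inner_left, mul_comm]
      _ = ∫ x, ⟪u, x⟫ ^ 2 * ‖x‖ ^ 2 ∂ν := by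
          rw [← integral_finsetSum _ fun i _ => hν.integrable_of_continuous (by fun_prop)]
          simp only [← Finset.mul_sum, b.sum_sq_inner_right]
      _ = ∫ x, ⟪u, x⟫ ^ 2 ∂ν :=
          integral_congr_ae (hν.norm_eq_one.mono fun x hx => by simp [hx])
  rw [hκ, ← mul_assoc, mul_assoc _ _ κ, sum_moments, hν.finrank_mul_integral_inner_sq, hu, one_pow,
    one_mul]

end IsUniformOnUnitSphere

end UniformOnUnitSphere

section UniformOnS2

variable {μ : Measure S2}

lemma isUniformOnUnitSphere_map_coe (hμ : ∀ g : V ≃ₗᵢ[ℝ] V, MeasurePreserving (sphereMap g) μ μ) :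
    IsUniformOnUnitSphere (μ.map ((↑) : S2 → V)) where
  measurePreserving g := by
    refine ⟨g.continuous.measurable, ?_⟩
    rw [Measure.map_map g.continuous.measurable measurable_subtype_coe]
    nth_rw 2 [← (hμ g).map_eq]
    rw [Measure.map_map measurable_subtype_coe (hμ g).measurable]
    rfl
  norm_eq_one := by
    rw [ae_map_iff measurable_subtype_coe.aemeasurable (by measurability)]
    exact .of_forall norm_S2

variable [IsProbabilityMeasure μ] (hμ : IsUniformOnUnitSphere (μ.map ((↑) : S2 → V)))
include hμ

lemma integral_sq_inner_S2 (v : V) : ∫ x : S2, ⟪v, (x : V)⟫ ^ 2 ∂μ = ‖v‖ ^ 2 / 3 := by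
  have := Measure.isProbabilityMeasure_map (μ := μ) measurable_subtype_coe.aemeasurable
  have moment := hμ.finrank_mul_integral_inner_sq v
  rw [integral_map measurable_subtype_coe.aemeasurable (by fun_prop), finrank_euclideanSpace_fin]
    at moment
  push_cast at moment
  linarith

lemma integral_sq_inner_mul_sq_inner_S2 (v w : V) :
    ∫ x : S2, ⟪v, (x : V)⟫ ^ 2 * ⟪w, (x : V)⟫ ^ 2 ∂μ =
      (‖v‖ ^ 2 * ‖w‖ ^ 2 + 2 * ⟪v, w⟫ ^ 2) / 15 := by
  have := Measure.isProbabilityMeasure_map (μ := μ) measurable_subtype_coe.aemeasurable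
  have moment := hμ.finrank_mul_integral_inner_sq_mul_inner_sq v w
  rw [integral_map measurable_subtype_coe.aemeasurable (by fun_prop), finrank_euclideanSpace_fin]
    at moment
  push_cast at moment
  linarith

lemma integral_integral_sq_inner_S2 :
    ∫ y : S2, ∫ x : S2, ⟪(x : V), (y : V)⟫ ^ 2 ∂μ ∂μ = 1 / 3 := by
  simp [real_inner_comm, integral_sq_inner_S2 hμ]

lemma integral_inner_excess (y : S2) (v : V) :
    ∫ x : S2, ⟪v, excess x y v⟫ ∂μ = (‖v‖ ^ 2 - ⟪(y : V), v⟫ ^ 2) / 15 := by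
  have norm_sq_cross : ‖cross y v‖ ^ 2 = ‖v‖ ^ 2 - ⟪(y : V), v⟫ ^ 2 := by
    rw [← real_inner_self_eq_norm_sq, inner_cross_cross, inner_self_S2, real_inner_self_eq_norm_sq,
      real_inner_comm (y : V), one_mul, sq ⟪(y : V), v⟫]
  have integrand_eq (x : S2) : ⟪v, excess x y v⟫ = ⟪cross y v, (x : V)⟫ ^ 2
      + ⟪(y : V), (x : V)⟫ ^ 2 * ⟪cross y v, (x : V)⟫ ^ 2 - 3⁻¹ * ‖cross y v‖ ^ 2 := by
    rw [inner_excess, norm_sq_plane_starProjection, norm_sq_cross, real_inner_comm v,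
      inner_cross_rotate v, real_inner_comm (x : V) (cross _ _), real_inner_comm (x : V) (y : V)]
    ring
  simp only [integrand_eq]
  rw [integral_sub, integral_add, integral_sq_inner_S2 hμ, integral_sq_inner_mul_sq_inner_S2 hμ,
    inner_cross_left, norm_S2, integral_const, norm_sq_cross, probReal_univ, one_smul]
  · ring
  all_goals exact integrable_of_compactSpace (by fun_prop)

lemma integral_integral_inner_excess (v : V) :
    ∫ y : S2, ∫ x : S2, ⟪v, excess x y v⟫ ∂μ ∂μ = 2 / 45 * ‖v‖ ^ 2 := by
  simp only [integral_inner_excess hμ, real_inner_comm v]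
  rw [integral_div, integral_sub, integral_sq_inner_S2 hμ, integral_const, probReal_univ, one_smul]
  · ring
  all_goals exact integrable_of_compactSpace (by fun_prop)

end UniformOnS2

/-- Let `x₁, …, x_N` be independent random points distributed uniformly on
the sphere (i.e. distributed according to the product of `N` copies of the rotation
invariant probability measure `μ`).  Then the probability that `dim 𝕍_N = 3` tends to `1`
as `N → ∞`. -/
theorem intrinsic_reconstitution_admissibility
    (μ : Measure S2) [IsProbabilityMeasure μ]
    (hμ : ∀ g : V ≃ₗᵢ[ℝ] V, MeasurePreserving (sphereMap g) μ μ) :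
    Filter.Tendsto
      (fun N : ℕ =>
        (Measure.pi fun _ : Fin N => μ)
          {p : Fin N → S2 | Module.finrank ℝ (VN N p) = 3})
      Filter.atTop (nhds 1) := by
  obtain ⟨Ω, _, P, x, -, hlaw, hindep, -⟩ := ProbabilityTheory.exists_iid ℕ μ
  have huniform := isUniformOnUnitSphere_map_coe hμ
  have hinner : ∫ y : S2, ∫ x : S2, ⟪(x : V), (y : V)⟫ ^ 2 ∂μ ∂μ < 4 / 9 :=
    (integral_integral_sq_inner_S2 huniform).trans_lt (by norm_num)
  have hexcess (v : V) : 2 / 45 * ‖v‖ ^ 2 ≤ ∫ y, ∫ x, ⟪v, excess x y v⟫ ∂μ ∂μ :=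
    (integral_integral_inner_excess huniform v).ge
  exact tendsto_measure_pi_of_ae_eventually hlaw hindep _ <|
    ae_eventually_finrank_VN_eq_three hlaw (fun _ _ hij => hindep.indepFun hij) hinner
      (by norm_num) hexcess
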